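/- arXiv:2005.06451 — 5 statements merged into one kernel-verified Lean document; each statement's English description precedes it below -/
import Mathlib

section
/- (Theorem 5.3, Liouville-type theorem) Let λ₀ : ℝ^N × ℝ → ℝ satisfy 0 < m ≤ λ₀ ≤ M, and let u be a nonnegative classical solution of the dead-core equation Δ_p u − ∂_t u = λ₀ u₊^q on all of ℝ^N × ℝ with ∂_t u ≥ 0 everywhere and u(0,0) = 0. Assume u(x,t) = o( max{‖x‖, |t|^{1/θ}}^{p/(p−q−1)} ) as max{‖x‖, |t|^{1/θ}} → ∞, i.e. for every ε > 0 there exists R > 0 such that u(x,t) ≤ ε · max{‖x‖, |t|^{1/θ}}^{p/(p−q−1)} whenever max{‖x‖, |t|^{1/θ}} ≥ R. Then u ≡ 0 on ℝ^N × ℝ. -/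
noncomputable section

open Set Metric MeasureTheory

/-- Euclidean space `ℝ^N`. -/
abbrev Euc (N : ℕ) := EuclideanSpace ℝ (Fin N)

/-- `s₊^q`: equals `(max s 0)^q` if `s > 0` and `0` otherwise. -/
def plusPowQ (q s : ℝ) : ℝ := if 0 < s then (max s 0) ^ q else 0

/-- The spatial gradient `∇u(x,t)`. -/
def spatialGrad (N : ℕ) (u : Euc N × ℝ → ℝ) (z : Euc N × ℝ) : Euc N :=
  gradient (fun y => u (y, z.2)) z.1

/-- The vector field `V(y,t) = ‖∇u(y,t)‖^(p-2) ∇u(y,t)`. -/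
def pVF (N : ℕ) (p : ℝ) (u : Euc N × ℝ → ℝ) (z : Euc N × ℝ) : Euc N :=
  ‖spatialGrad N u z‖ ^ (p - 2) • spatialGrad N u z

/-- The `p`-Laplacian `Δ_p u` realized as `trace (D_x V)` with `V = ‖∇u‖^(p-2)∇u`. -/
def pLap (N : ℕ) (p : ℝ) (u : Euc N × ℝ → ℝ) (z : Euc N × ℝ) : ℝ :=
  LinearMap.trace ℝ (Euc N) (fderiv ℝ (fun y => pVF N p u (y, z.2)) z.1).toLinearMap

/-- The time derivative `∂ₜ u`. -/
def timeDeriv (N : ℕ) (u : Euc N × ℝ → ℝ) (z : Euc N × ℝ) : ℝ :=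
  deriv (fun t => u (z.1, t)) z.2

/-- `u` is a classical solution of the dead-core equation `Δ_p u - ∂_t u = λ₀ u₊^q` on `D`:
`u` is continuous on `D` and at every point of `D` the spatial gradient and time derivative
exist, `V = ‖∇u‖^(p-2)∇u` is spatially differentiable, and the PDE holds. -/
def IsDCSol (N : ℕ) (p q : ℝ) (lam u : Euc N × ℝ → ℝ) (D : Set (Euc N × ℝ)) : Prop :=
  ContinuousOn u D ∧
  ∀ z ∈ D,
    DifferentiableAt ℝ (fun y => u (y, z.2)) z.1 ∧
    DifferentiableAt ℝ (fun t => u (z.1, t)) z.2 ∧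
    DifferentiableAt ℝ (fun y => pVF N p u (y, z.2)) z.1 ∧
    pLap N p u z - timeDeriv N u z = lam z * plusPowQ q (u z)

/-- The intrinsic scaling exponent `θ = p(1-q)/(p-1-q)`. -/
def thetaV (p q : ℝ) : ℝ := p * (1 - q) / (p - 1 - q)

/-- The intrinsic cylinder `Q_r(x₀,t₀) = B_r(x₀) × (t₀ - r^θ, t₀ + r^θ)`. -/
def cylQ (N : ℕ) (θ r : ℝ) (z0 : Euc N × ℝ) : Set (Euc N × ℝ) :=
  (ball z0.1 r) ×ˢ (Ioo (z0.2 - r ^ θ) (z0.2 + r ^ θ))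

/-- The lower cylinder `Q_r⁻(x₀,t₀) = B_r(x₀) × (t₀ - r^θ, t₀]`. -/
def cylQm (N : ℕ) (θ r : ℝ) (z0 : Euc N × ℝ) : Set (Euc N × ℝ) :=
  (ball z0.1 r) ×ˢ (Ioc (z0.2 - r ^ θ) z0.2)

/-- The upper cylinder `Q_r⁺(x₀,t₀) = B_r(x₀) × [t₀, t₀ + r^θ)`. -/
def cylQp (N : ℕ) (θ r : ℝ) (z0 : Euc N × ℝ) : Set (Euc N × ℝ) :=
  (ball z0.1 r) ×ˢ (Ico z0.2 (z0.2 + r ^ θ))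

/-- The parabolic boundary of `Q_r⁻(x₀,t₀)`:
`(closure(B_r) × {t₀ - r^θ}) ∪ (∂B_r × (t₀ - r^θ, t₀])`. -/
def parBdryQm (N : ℕ) (θ r : ℝ) (z0 : Euc N × ℝ) : Set (Euc N × ℝ) :=
  ((closedBall z0.1 r) ×ˢ ({z0.2 - r ^ θ} : Set ℝ)) ∪
    ((sphere z0.1 r) ×ˢ (Ioc (z0.2 - r ^ θ) z0.2))

/-- The class `𝔍 = 𝔍_p(λ₀,q)(Q₁)`: classical solutions `u` on `Q₁` (for some `λ₀` with
`m ≤ λ₀ ≤ M`) with `0 ≤ u ≤ 1`, `∂ₜ u ≥ 0` on `Q₁` and `u(0,0) = 0`. -/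
def memJ (N : ℕ) (p q m M : ℝ) (u : Euc N × ℝ → ℝ) : Prop :=
  ∃ lam : Euc N × ℝ → ℝ,
    (∀ z ∈ cylQ N (thetaV p q) 1 (0, 0), m ≤ lam z ∧ lam z ≤ M) ∧
    IsDCSol N p q lam u (cylQ N (thetaV p q) 1 (0, 0)) ∧
    (∀ z ∈ cylQ N (thetaV p q) 1 (0, 0), 0 ≤ u z ∧ u z ≤ 1) ∧
    (∀ z ∈ cylQ N (thetaV p q) 1 (0, 0), 0 ≤ timeDeriv N u z) ∧
    u (0, 0) = 0

/-- `S_r[u] = sup over Q_r⁻ of u` (cylinders centered at the origin). -/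
def Sr (N : ℕ) (p q r : ℝ) (u : Euc N × ℝ → ℝ) : ℝ :=
  sSup (u '' cylQm N (thetaV p q) r (0, 0))

section Helpers

variable {E : Type*} [NormedAddCommGroup E] [InnerProductSpace ℝ E]

/-- Derivative of `y ↦ ‖y‖^β • y` away from the origin. -/
theorem aux_hasFDerivAt_powmap (β : ℝ) (x : E) (hx : x ≠ 0) :
    HasFDerivAt (fun y : E => ‖y‖ ^ β • y)
      (‖x‖ ^ β • ContinuousLinearMap.id ℝ E +
        ((β * ‖x‖ ^ (β - 2)) • innerSL ℝ x).smulRight x) x := by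
  have h1 : HasFDerivAt (fun y : E => ‖y‖ ^ β) ((β * ‖x‖ ^ (β - 2)) • innerSL ℝ x) x := by
    apply HasStrictFDerivAt.hasFDerivAt
    convert! (hasStrictFDerivAt_norm_sq x).rpow_const (p := β / 2) (by simp [hx]) using 0
    simp_rw [← Real.rpow_natCast_mul (norm_nonneg _), ← Nat.cast_smul_eq_nsmul ℝ, smul_smul]
    ring_nf
  exact h1.smul (hasFDerivAt_id x)

/-- Inverse of the map `a ↦ ‖a‖^(p-2) • a`. -/
theorem aux_inverse (p : ℝ) (hp : 2 ≤ p) (a : E) :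
    a = ‖‖a‖ ^ (p - 2) • a‖ ^ ((2 - p) / (p - 1)) • (‖a‖ ^ (p - 2) • a) := by
  by_cases ha : a = 0
  · simp [ha]
  have hn : 0 < ‖a‖ := norm_pos_iff.mpr ha
  have h1 : ‖‖a‖ ^ (p - 2) • a‖ = ‖a‖ ^ (p - 1) := by
    rw [norm_smul, Real.norm_of_nonneg (by positivity), ← Real.rpow_add_one hn.ne']
    ring_nf
  have h2 : (p - 1) * ((2 - p) / (p - 1)) = 2 - p := by
    have : p - 1 ≠ 0 := by linarith
    field_simp
  rw [h1, ← Real.rpow_mul hn.le, h2, smul_smul, ← Real.rpow_add hn]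
  simp

variable [CompleteSpace E]

/-- Second order necessary condition at a local maximum. -/
theorem aux_second_order (f : E → ℝ) (G : E → E) (H : E →L[ℝ] E) (x e : E)
    (hG : ∀ y, HasGradientAt f (G y) y) (hH : HasFDerivAt G H x) (hmax : IsLocalMax f x) :
    inner ℝ e (H e) ≤ 0 := by
  have hline : ∀ s : ℝ, HasDerivAt (fun s : ℝ => x + s • e) e s := fun s => by
    simpa using ((hasDerivAt_id s).smul_const e).const_add x
  have hd : ∀ s : ℝ, HasDerivAt (fun s : ℝ => f (x + s • e)) (inner ℝ e (G (x + s • e))) s := by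
    intro s
    have := (hG (x + s • e)).hasFDerivAt.comp_hasDerivAt s (hline s)
    simpa [real_inner_comm, Function.comp_def] using this
  have hderiv : deriv (fun s : ℝ => f (x + s • e)) = fun s => inner ℝ e (G (x + s • e)) :=
    funext fun s => (hd s).deriv
  have hdd : HasDerivAt (fun s : ℝ => (inner ℝ e (G (x + s • e)) : ℝ)) (inner ℝ e (H e)) 0 := by
    have hH' : HasFDerivAt G H (x + (0 : ℝ) • e) := by simpa using hH
    have h2 := hH'.comp_hasDerivAt (0 : ℝ) (hline 0)
    have := (innerSL ℝ e).hasFDerivAt.comp_hasDerivAt (0 : ℝ) h2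
    simpa [Function.comp_def] using this
  have hmax' : IsLocalMax (fun s : ℝ => f (x + s • e)) 0 := by
    have hc : ContinuousAt (fun s : ℝ => x + s • e) 0 := (hline 0).continuousAt
    have ht : Filter.Tendsto (fun s : ℝ => x + s • e) (nhds 0) (nhds x) := by
      simpa [ContinuousAt] using hc
    have := ht.eventually hmax
    filter_upwards [this] with s hs
    simpa using hs
  by_contra! hpos
  have hmin : IsLocalMin (fun s : ℝ => f (x + s • e)) 0 := by
    apply isLocalMin_of_deriv_deriv_pos
    · rw [hderiv, hdd.deriv]; exact hpos
    · exact hmax'.deriv_eq_zero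
    · exact (hd 0).continuousAt
  have hconst : (fun s : ℝ => f (x + s • e)) =ᶠ[nhds 0] fun _ => f (x + (0 : ℝ) • e) := by
    filter_upwards [hmin, hmax'] with s h1 h2
    exact le_antisymm h2 h1
  have h3 := hconst.deriv
  rw [hderiv] at h3
  have h4 := h3.deriv_eq
  rw [hdd.deriv] at h4
  simp at h4
  linarith

/-- Trace of the linearisation of `‖a‖^(p-2) a` composed with `H`, bounded through the quadratic
form of `H`. -/
theorem aux_trace (N : ℕ) (p A k α : ℝ) (hp : 2 ≤ p) (z a : Euc N) (hz : z ≠ 0) (ha : a ≠ 0)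
    (haz : a = k • z) (H : Euc N →L[ℝ] Euc N)
    (hA : A = N + (α - 2) + (p - 2) * (α - 1))
    (hH : ∀ e : Euc N, inner ℝ e (H e) ≤
      k * (‖e‖ ^ 2 + (α - 2) * (inner ℝ z e) ^ 2 / ‖z‖ ^ 2)) :
    LinearMap.trace ℝ (Euc N)
      ((‖a‖ ^ (p - 2) • ContinuousLinearMap.id ℝ (Euc N) +
        (((p - 2) * ‖a‖ ^ (p - 2 - 2)) • innerSL ℝ a).smulRight a).comp H).toLinearMap
      ≤ ‖a‖ ^ (p - 2) * (k * A) := by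
  have hz0 : 0 < ‖z‖ := norm_pos_iff.mpr hz
  have ha0 : 0 < ‖a‖ := norm_pos_iff.mpr ha
  let b := EuclideanSpace.basisFun (Fin N) ℝ
  rw [LinearMap.trace_eq_sum_inner _ b]
  have e1 : ∀ i, inner ℝ (b i) (((‖a‖ ^ (p - 2) • ContinuousLinearMap.id ℝ (Euc N) +
        (((p - 2) * ‖a‖ ^ (p - 2 - 2)) • innerSL ℝ a).smulRight a).comp H).toLinearMap (b i))
      = ‖a‖ ^ (p - 2) * inner ℝ (b i) (H (b i)) +
        (p - 2) * ‖a‖ ^ (p - 2 - 2) * (inner ℝ a (H (inner ℝ (b i) a • b i))) := by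
    intro i
    simp [inner_add_right, inner_smul_right]
    ring
  rw [Finset.sum_congr rfl (fun i _ => e1 i), Finset.sum_add_distrib, ← Finset.mul_sum,
    ← Finset.mul_sum, ← inner_sum, ← map_sum, b.sum_repr' a]
  have s1 : ∑ i, inner ℝ (b i) (H (b i)) ≤ k * (N + (α - 2)) := by
    refine (Finset.sum_le_sum (fun i _ => hH (b i))).trans (le_of_eq ?_)
    rw [← Finset.mul_sum, Finset.sum_add_distrib, ← Finset.sum_div, ← Finset.mul_sum]
    have : ∑ i, (inner ℝ z (b i) : ℝ) ^ 2 = ‖z‖ ^ 2 := by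
      simpa using b.sum_sq_norm_inner_left z
    rw [this]
    have h1 : ∑ i, ‖b i‖ ^ 2 = (N : ℝ) := by simp
    rw [h1]
    field_simp
  have s2 : inner ℝ a (H a) ≤ k * (α - 1) * ‖a‖ ^ 2 := by
    refine (hH a).trans (le_of_eq ?_)
    have : (inner ℝ z a : ℝ) ^ 2 = ‖z‖ ^ 2 * ‖a‖ ^ 2 := by
      rw [haz, inner_smul_right, real_inner_self_eq_norm_sq, norm_smul, mul_pow, mul_pow,
        Real.norm_eq_abs, sq_abs]
      ring
    rw [this]
    field_simp
    ring
  have hpow : ‖a‖ ^ (p - 2 - 2) * ‖a‖ ^ 2 = ‖a‖ ^ (p - 2) := by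
    rw [← Real.rpow_natCast ‖a‖ 2, ← Real.rpow_add ha0]
    norm_num
  have t1 := mul_le_mul_of_nonneg_left s1 (Real.rpow_nonneg ha0.le (p - 2))
  have t2 := mul_le_mul_of_nonneg_left s2
    (mul_nonneg (sub_nonneg.mpr hp) (Real.rpow_nonneg ha0.le (p - 2 - 2)))
  have t3 : (p - 2) * ‖a‖ ^ (p - 2 - 2) * (k * (α - 1) * ‖a‖ ^ 2)
      = (p - 2) * k * (α - 1) * ‖a‖ ^ (p - 2) := by rw [← hpow]; ring
  rw [t3] at t2
  refine (add_le_add t1 t2).trans (le_of_eq ?_)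
  rw [hA]; ring

end Helpers

/-- Elliptic Liouville theorem for subsolutions `Δ_p v ≥ m v₊^q`. -/
theorem aux_elliptic (N : ℕ) (hN : 1 ≤ N) (p q m α : ℝ)
    (hp : 2 ≤ p) (hq0 : 0 ≤ q) (hq1 : q < 1) (hm : 0 < m) (hα : α = p / (p - q - 1))
    (v : Euc N → ℝ) (hv : Differentiable ℝ v)
    (hV : Differentiable ℝ (fun y => ‖gradient v y‖ ^ (p - 2) • gradient v y))
    (hpde : ∀ x, m * plusPowQ q (v x) ≤ LinearMap.trace ℝ (Euc N)
      (fderiv ℝ (fun y => ‖gradient v y‖ ^ (p - 2) • gradient v y) x).toLinearMap)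
    (hgr : ∀ ε : ℝ, 0 < ε → ∃ R : ℝ, 0 < R ∧ ∀ x, R ≤ ‖x‖ → v x ≤ ε * ‖x‖ ^ α)
    (x0 : Euc N) : v x0 ≤ 0 := by
  by_contra! hx0
  have hs : 0 < p - q - 1 := by linarith
  have hα1 : 1 < α := by rw [hα, lt_div_iff₀ hs]; linarith
  have hαs : α * (p - q - 1) = p := by rw [hα]; field_simp
  have hgrad : ∀ y, HasGradientAt v (gradient v y) y := fun y => (hv y).hasGradientAt
  -- a point with positive value and nonzero gradient
  obtain ⟨y, hvy, hgy⟩ : ∃ y, 0 < v y ∧ gradient v y ≠ 0 := by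
    by_contra! hcon
    have hev : (fun y => ‖gradient v y‖ ^ (p - 2) • gradient v y) =ᶠ[nhds x0] fun _ => 0 := by
      filter_upwards [hv.continuous.continuousAt.eventually (lt_mem_nhds hx0)] with y hy
      simp [hcon y hy]
    have h1 := hpde x0
    rw [hev.fderiv_eq] at h1
    simp [plusPowQ, hx0] at h1
    have : 0 < m * (max (v x0) 0) ^ q := by
      have : 0 < max (v x0) 0 := lt_max_of_lt_left hx0
      positivity
    linarith
  -- the constant
  obtain ⟨A, hA⟩ : ∃ A : ℝ, A = N + (α - 2) + (p - 2) * (α - 1) := ⟨_, rfl⟩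
  have hNr : (1 : ℝ) ≤ N := by exact_mod_cast hN
  have hA0 : 0 < A := by
    have : 0 ≤ (p - 2) * (α - 1) := mul_nonneg (by linarith) (by linarith)
    rw [hA]; linarith
  have hα0 : 0 < α := by linarith
  obtain ⟨c, hc0, hc⟩ : ∃ c : ℝ, 0 < c ∧ (c * α) ^ (p - 1) * A < m * c ^ q := by
    have hB : 0 < m / (2 * (α ^ (p - 1) * A)) := by positivity
    refine ⟨(m / (2 * (α ^ (p - 1) * A))) ^ (1 / (p - q - 1)), by positivity, ?_⟩
    set c := (m / (2 * (α ^ (p - 1) * A))) ^ (1 / (p - q - 1)) with hcdef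
    have hc0 : 0 < c := by positivity
    have h1 : c ^ (p - q - 1) = m / (2 * (α ^ (p - 1) * A)) := by
      rw [hcdef, ← Real.rpow_mul hB.le, one_div_mul_cancel hs.ne', Real.rpow_one]
    have h2 : c ^ (p - 1) = c ^ (p - q - 1) * c ^ q := by
      rw [← Real.rpow_add hc0]; ring_nf
    have hαp : 0 < α ^ (p - 1) := by positivity
    rw [Real.mul_rpow hc0.le hα0.le, h2, h1]
    have h3 : m / (2 * (α ^ (p - 1) * A)) * c ^ q * α ^ (p - 1) * A = m / 2 * c ^ q := by
      field_simp
    rw [h3]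
    have : 0 < c ^ q := by positivity
    nlinarith
  -- the barrier
  let w : Euc N → ℝ := fun x => c * ‖x - y‖ ^ α
  let Gw : Euc N → Euc N := fun x => (c * α) • (‖x - y‖ ^ (α - 2) • (x - y))
  have hw : ∀ x, HasGradientAt w (Gw x) x := by
    intro x
    rw [hasGradientAt_iff_hasFDerivAt]
    have h1 : HasFDerivAt (fun x : Euc N => x - y) (ContinuousLinearMap.id ℝ _) x :=
      (hasFDerivAt_id x).sub_const y
    have h2 := ((hasFDerivAt_norm_rpow (x - y) hα1).comp x h1).const_mul c
    convert! h2 using 1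
    ext e
    simp [Gw, inner_smul_left]
    ring
  have hG : ∀ x, HasGradientAt (fun x => v x - w x) (gradient v x - Gw x) x := by
    intro x
    have := (hgrad x).hasFDerivAt.sub (hw x).hasFDerivAt
    rw [hasGradientAt_iff_hasFDerivAt, map_sub]
    exact this
  have hfc : Continuous (fun x => v x - w x) :=
    continuous_iff_continuousAt.mpr fun x => (hG x).hasFDerivAt.continuousAt
  have hwy : w y = 0 := by simp [w, hα0.ne']
  -- existence of the maximum
  obtain ⟨x1, hx1⟩ : ∃ x1, ∀ x, v x - w x ≤ v x1 - w x1 := by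
    obtain ⟨R, hR0, hR⟩ := hgr (c * (1 / 2) ^ α) (by positivity)
    set R' := max R (2 * ‖y‖) with hR'
    have hyR : ‖y‖ ≤ R' := by
      have h1 : 2 * ‖y‖ ≤ R' := le_max_right _ _
      linarith [norm_nonneg y]
    obtain ⟨x1, -, hx1⟩ := (isCompact_closedBall (0 : Euc N) R').exists_isMaxOn
      ⟨y, by simpa using hyR⟩ hfc.continuousOn
    have hy1 : v y - w y ≤ v x1 - w x1 := hx1 (by simpa using hyR)
    refine ⟨x1, fun x => ?_⟩
    by_cases hx : ‖x‖ ≤ R'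
    · exact hx1 (by simpa using hx)
    · push Not at hx
      have h1 := hR x ((le_max_left _ _).trans hx.le)
      have h2 : 2 * ‖y‖ ≤ ‖x‖ := (le_max_right _ _).trans hx.le
      have h3 : 1 / 2 * ‖x‖ ≤ ‖x - y‖ := by
        have := norm_sub_norm_le x y
        linarith
      have h4 : (1 / 2) ^ α * ‖x‖ ^ α ≤ ‖x - y‖ ^ α := by
        rw [← Real.mul_rpow (by norm_num) (norm_nonneg x)]
        exact Real.rpow_le_rpow (by positivity) h3 hα0.le
      have h5 : v x ≤ w x := by
        have := mul_le_mul_of_nonneg_left h4 hc0.le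
        simp only [w]
        linarith
      linarith
  have hmax : IsLocalMax (fun x => v x - w x) x1 := Filter.Eventually.of_forall hx1
  have hgx1 : gradient v x1 = Gw x1 := by
    have h1 := hmax.hasFDerivAt_eq_zero (hG x1).hasFDerivAt
    have h2 : gradient v x1 - Gw x1 = 0 :=
      (LinearIsometryEquiv.map_eq_zero_iff _).mp h1
    exact sub_eq_zero.mp h2
  have hx1y : x1 ≠ y := by
    rintro rfl
    apply hgy
    rw [hgx1]; simp [Gw]
  obtain ⟨z, hzdef⟩ : ∃ z, z = x1 - y := ⟨_, rfl⟩
  have hz : z ≠ 0 := by rw [hzdef]; exact sub_ne_zero.mpr hx1y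
  have hz0 : 0 < ‖z‖ := norm_pos_iff.mpr hz
  obtain ⟨a, hadef⟩ : ∃ a, a = gradient v x1 := ⟨_, rfl⟩
  obtain ⟨k, hk⟩ : ∃ k, k = c * α * ‖z‖ ^ (α - 2) := ⟨_, rfl⟩
  have hk0 : 0 < k := by rw [hk]; positivity
  have haz : a = k • z := by
    rw [hadef, hgx1, hk, hzdef]; simp [Gw, smul_smul]
  have ha : a ≠ 0 := by rw [haz]; exact smul_ne_zero hk0.ne' hz
  have ha0 : 0 < ‖a‖ := norm_pos_iff.mpr ha
  -- the gradient of `v` is differentiable at `x1`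
  have hgd : DifferentiableAt ℝ (gradient v) x1 := by
    have h1 : gradient v = (fun ξ : Euc N => ‖ξ‖ ^ ((2 - p) / (p - 1)) • ξ) ∘
        (fun y => ‖gradient v y‖ ^ (p - 2) • gradient v y) :=
      funext fun y => aux_inverse p hp (gradient v y)
    rw [h1]
    refine DifferentiableAt.comp x1 ?_ (hV x1)
    refine (aux_hasFDerivAt_powmap _ _ ?_).differentiableAt
    rw [← hadef]
    exact smul_ne_zero (Real.rpow_pos_of_pos ha0 _).ne' ha
  obtain ⟨H, hH⟩ : ∃ H, HasFDerivAt (gradient v) H x1 := ⟨_, hgd.hasFDerivAt⟩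
  have hVd : fderiv ℝ (fun y => ‖gradient v y‖ ^ (p - 2) • gradient v y) x1 =
      (‖a‖ ^ (p - 2) • ContinuousLinearMap.id ℝ (Euc N) +
        (((p - 2) * ‖a‖ ^ (p - 2 - 2)) • innerSL ℝ a).smulRight a).comp H := by
    have h1 := aux_hasFDerivAt_powmap (p - 2) a ha
    rw [hadef] at h1
    have := (h1.comp x1 hH).fderiv
    rw [hadef]
    exact this
  have hGw : HasFDerivAt Gw ((c * α) • (‖z‖ ^ (α - 2) • ContinuousLinearMap.id ℝ (Euc N) +
        (((α - 2) * ‖z‖ ^ (α - 2 - 2)) • innerSL ℝ z).smulRight z)) x1 := by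
    have h1 : HasFDerivAt (fun x : Euc N => x - y) (ContinuousLinearMap.id ℝ _) x1 :=
      (hasFDerivAt_id x1).sub_const y
    have h2 := aux_hasFDerivAt_powmap (α - 2) z hz
    rw [hzdef] at h2
    have h3 := (h2.comp x1 h1).const_smul (c * α)
    rw [hzdef]
    exact h3
  have hquad : ∀ e : Euc N, inner ℝ e (H e) ≤
      k * (‖e‖ ^ 2 + (α - 2) * (inner ℝ z e) ^ 2 / ‖z‖ ^ 2) := by
    intro e
    have h1 := aux_second_order _ _ _ x1 e hG (hH.sub hGw) hmax
    have hpow : ‖z‖ ^ (α - 2 - 2) = ‖z‖ ^ (α - 2) / ‖z‖ ^ 2 := by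
      rw [Real.rpow_sub hz0 (α - 2) 2]; norm_num
    have h2 : k * (‖e‖ ^ 2 + (α - 2) * (inner ℝ z e) ^ 2 / ‖z‖ ^ 2) =
        inner ℝ e (((c * α) • (‖z‖ ^ (α - 2) • ContinuousLinearMap.id ℝ (Euc N) +
        (((α - 2) * ‖z‖ ^ (α - 2 - 2)) • innerSL ℝ z).smulRight z)) e) := by
      simp only [ContinuousLinearMap.smul_apply, ContinuousLinearMap.add_apply,
        ContinuousLinearMap.smulRight_apply, inner_add_right, inner_smul_right,
        ContinuousLinearMap.id_apply, innerSL_apply_apply, smul_eq_mul,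
        real_inner_self_eq_norm_sq]
      rw [hpow, hk, real_inner_comm z e]
      ring
    rw [h2]
    rw [ContinuousLinearMap.sub_apply, inner_sub_right] at h1
    linarith
  have htr := aux_trace N p A k α hp z a hz ha haz H hA hquad
  have hp1 := hpde x1
  rw [hVd] at hp1
  have hvx1 : w x1 < v x1 := by
    have := hx1 y
    rw [hwy] at this
    linarith
  have hwx1 : w x1 = c * ‖z‖ ^ α := by rw [hzdef]
  rw [hwx1] at hvx1
  have hwpos : 0 < c * ‖z‖ ^ α := by positivity
  have hvpos : 0 < v x1 := hwpos.trans hvx1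
  have hpp : plusPowQ q (v x1) = (v x1) ^ q := by
    simp [plusPowQ, hvpos, max_eq_left hvpos.le]
  have hlow : c ^ q * ‖z‖ ^ (α * q) ≤ (v x1) ^ q := by
    rw [Real.rpow_mul hz0.le, ← Real.mul_rpow hc0.le (by positivity)]
    exact Real.rpow_le_rpow hwpos.le hvx1.le hq0
  have hna : ‖a‖ = k * ‖z‖ := by rw [haz, norm_smul, Real.norm_of_nonneg hk0.le]
  have hkz : k * ‖z‖ = c * α * ‖z‖ ^ (α - 1) := by
    rw [hk, mul_assoc, ← Real.rpow_add_one hz0.ne']; ring_nf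
  have hk1 : ‖a‖ ^ (p - 2) * k = (c * α) ^ (p - 1) * ‖z‖ ^ (α * q) := by
    have h1 : ‖a‖ ^ (p - 2) * k = ‖a‖ ^ (p - 1) / ‖z‖ := by
      have : ‖a‖ ^ (p - 1) = ‖a‖ ^ (p - 2) * ‖a‖ := by
        rw [← Real.rpow_add_one ha0.ne']; ring_nf
      rw [this, hna]; field_simp
    rw [h1, hna, hkz, Real.mul_rpow (by positivity) (by positivity), ← Real.rpow_mul hz0.le,
      mul_div_assoc, ← Real.rpow_sub_one hz0.ne']
    congr 2
    nlinarith
  have hfin : (c * α) ^ (p - 1) * A * ‖z‖ ^ (α * q) < m * c ^ q * ‖z‖ ^ (α * q) :=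
    mul_lt_mul_of_pos_right hc (by positivity)
  have h6 : m * (c ^ q * ‖z‖ ^ (α * q)) ≤ m * (v x1) ^ q := mul_le_mul_of_nonneg_left hlow hm.le
  have h7 : ‖a‖ ^ (p - 2) * (k * A) = (c * α) ^ (p - 1) * A * ‖z‖ ^ (α * q) := by
    rw [← mul_assoc, hk1]; ring
  rw [hpp] at hp1
  linarith

/-- **Theorem 5.3 (Liouville-type theorem).** -/
theorem liouville_dead_core
    (N : ℕ) (hN : 1 ≤ N) (p q m M : ℝ)
    (hp : 2 ≤ p) (hq0 : 0 ≤ q) (hq1 : q < 1) (hm : 0 < m) (hmM : m ≤ M)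
    (lam u : Euc N × ℝ → ℝ)
    (hlam : ∀ z : Euc N × ℝ, m ≤ lam z ∧ lam z ≤ M)
    (hsol : IsDCSol N p q lam u univ)
    (hnn : ∀ z : Euc N × ℝ, 0 ≤ u z)
    (hmono : ∀ z : Euc N × ℝ, 0 ≤ timeDeriv N u z)
    (h0 : u (0, 0) = 0)
    (hgrowth : ∀ ε : ℝ, 0 < ε → ∃ R : ℝ, 0 < R ∧
      ∀ z : Euc N × ℝ, R ≤ max ‖z.1‖ (|z.2| ^ (1 / thetaV p q)) →
        u z ≤ ε * max ‖z.1‖ (|z.2| ^ (1 / thetaV p q)) ^ (p / (p - q - 1))) :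
    ∀ z : Euc N × ℝ, u z = 0 := by
  rintro ⟨x, t⟩
  refine le_antisymm ?_ (hnn _)
  obtain ⟨-, hs⟩ := hsol
  refine aux_elliptic N hN p q m (p / (p - q - 1)) hp hq0 hq1 hm rfl (fun y => u (y, t))
    (fun y => (hs (y, t) (mem_univ _)).1) (fun y => (hs (y, t) (mem_univ _)).2.2.1) ?_ ?_ x
  · intro y
    have h1 := (hs (y, t) (mem_univ _)).2.2.2
    have h2 := hmono (y, t)
    have h3 : m * plusPowQ q (u (y, t)) ≤ lam (y, t) * plusPowQ q (u (y, t)) := by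
      refine mul_le_mul_of_nonneg_right (hlam _).1 ?_
      unfold plusPowQ
      split_ifs
      · positivity
      · exact le_rfl
    have h4 : m * plusPowQ q (u (y, t)) ≤ pLap N p u (y, t) := by linarith
    exact h4
  · intro ε hε
    obtain ⟨R, hR0, hR⟩ := hgrowth ε hε
    refine ⟨max R (|t| ^ (1 / thetaV p q)), lt_max_of_lt_left hR0, fun y hy => ?_⟩
    have h1 : max ‖y‖ (|t| ^ (1 / thetaV p q)) = ‖y‖ := max_eq_left ((le_max_right _ _).trans hy)
    have h2 := hR (y, t)
    simp only [h1] at h2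
    exact h2 ((le_max_left _ _).trans hy)
end
end

section
/- (Barrier for the non-degeneracy theorem, proof of Theorem 1.1) There exists a constant c̄ > 0, depending only on N, p, q and m, such that for every c ∈ (0, c̄] the function Φ̂(x,t) := c · ( ‖x‖^{p/(p−1)} + (−t)^{(p−1−q)/((p−1)(1−q))} )^{(p−1)/(p−1−q)}, defined for x ∈ ℝ^N and t < 0, satisfies at every point (x,t) with 0 < ‖x‖ < 1 and −1 < t < 0: the vector field V(y,s) := ‖∇Φ̂(y,s)‖^{p−2} ∇Φ̂(y,s) is differentiable in the space variable at x, ∂_t Φ̂(x,t) exists, and trace(D_x V(x,t)) − ∂_t Φ̂(x,t) ≤ m · Φ̂(x,t)^q. In particular Δ_p Φ̂ − ∂_t Φ̂ − λ₀ Φ̂^q ≤ 0 there for every λ₀ ≥ m. -/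
noncomputable section

open Set Metric MeasureTheory

lemma bar_grad (N : ℕ) (c a k τ : ℝ) (ha : 1 < a) (hτ : 0 < τ) (y : Euc N) :
    gradient (fun y : Euc N => c * (‖y‖ ^ a + τ) ^ k) y
      = (c * k * a * (‖y‖ ^ a + τ) ^ (k - 1) * ‖y‖ ^ (a - 2)) • y := by
  apply HasGradientAt.gradient
  rw [hasGradientAt_iff_hasFDerivAt]
  have hw : 0 < ‖y‖ ^ a + τ := by positivity
  have h := (((hasFDerivAt_norm_rpow y ha).add_const τ).rpow_const (p := k)
    (Or.inl hw.ne')).const_mul c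
  refine h.congr_fderiv ?_
  ext v
  simp
  ring

lemma bar_V (N : ℕ) (p c a k τ : ℝ) (ha : 1 < a) (hap : (a - 1) * (p - 1) = 1) (hc : 0 < c)
    (hk : 0 < k) (hτ : 0 < τ) (y : Euc N) (hy : 0 < ‖y‖) :
    ‖gradient (fun y : Euc N => c * (‖y‖ ^ a + τ) ^ k) y‖ ^ (p - 2) •
      gradient (fun y : Euc N => c * (‖y‖ ^ a + τ) ^ k) y
      = ((c * k * a) ^ (p - 1) * (‖y‖ ^ a + τ) ^ ((k - 1) * (p - 1))) • y := by
  rw [bar_grad N c a k τ ha hτ y]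
  have hw : 0 < ‖y‖ ^ a + τ := by positivity
  have ha0 : 0 < a := by linarith
  generalize ‖y‖ ^ a + τ = w at hw
  rw [norm_smul, smul_smul, Real.norm_of_nonneg (by positivity)]
  congr 1
  generalize ‖y‖ = r at hy
  have e1 : c * k * a * w ^ (k - 1) * r ^ (a - 2) * r
      = (c * k * a * w ^ (k - 1)) * r ^ (a - 1) := by
    rw [show a - 1 = (a - 2) + 1 by ring, Real.rpow_add hy, Real.rpow_one]; ring
  have hG : 0 < c * k * a * w ^ (k - 1) := by positivity
  rw [e1, Real.rpow_mul hw.le, ← Real.mul_rpow (by positivity) (by positivity)]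
  generalize c * k * a * w ^ (k - 1) = G at hG
  rw [Real.mul_rpow hG.le (by positivity), ← Real.rpow_mul hy.le]
  have e2 : G ^ (p - 1) = G ^ (p - 2) * G := by
    rw [show p - 1 = (p - 2) + 1 by ring, Real.rpow_add hG, Real.rpow_one]
  have e3 : r ^ ((a - 1) * (p - 2)) * r ^ (a - 2) = 1 := by
    rw [← Real.rpow_add hy, show (a - 1) * (p - 2) + (a - 2) = 0 by linear_combination hap,
      Real.rpow_zero]
  rw [e2]
  linear_combination (G ^ (p - 2) * G) * e3

lemma bar_div (N : ℕ) (A a b τ : ℝ) (ha : 1 < a) (hτ : 0 < τ) (x : Euc N) (hx : 0 < ‖x‖) :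
    ∃ L : Euc N →L[ℝ] Euc N,
      HasFDerivAt (fun y : Euc N => (A * (‖y‖ ^ a + τ) ^ b) • y) L x ∧
      LinearMap.trace ℝ (Euc N) L.toLinearMap
        = A * (N * (‖x‖ ^ a + τ) ^ b + b * (‖x‖ ^ a + τ) ^ (b - 1) * (a * ‖x‖ ^ a)) := by
  have hw : 0 < ‖x‖ ^ a + τ := by positivity
  have h := ((((hasFDerivAt_norm_rpow x ha).add_const τ).rpow_const (p := b)
    (Or.inl hw.ne')).const_mul A).smul (hasFDerivAt_id x)
  refine ⟨_, h, ?_⟩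
  have e : ‖x‖ ^ (a - 2) * ‖x‖ ^ 2 = ‖x‖ ^ a := by
    rw [← Real.rpow_natCast ‖x‖ 2, ← Real.rpow_add hx]; congr 1; push_cast; ring
  rw [ContinuousLinearMap.toLinearMap_add, map_add, ContinuousLinearMap.toLinearMap_smul, map_smul]
  rw [show ((ContinuousLinearMap.id ℝ (Euc N)).toLinearMap) = LinearMap.id from rfl,
    LinearMap.trace_id]
  have e4 : ∀ f : Euc N →L[ℝ] ℝ, LinearMap.trace ℝ (Euc N) (f.smulRight x).toLinearMap = f x :=
    fun f => LinearMap.trace_smulRight f.toLinearMap x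
  simp only [id]
  rw [e4]
  simp
  linear_combination (A * b * (‖x‖ ^ a + τ) ^ (b - 1) * a) * e

lemma bar_time (c R b k t : ℝ) (hR : 0 < R) (ht : t < 0) :
    HasDerivAt (fun s : ℝ => c * (R + (-s) ^ b) ^ k)
      (-(c * (b * k) * (R + (-t) ^ b) ^ (k - 1) * (-t) ^ (b - 1))) t := by
  have hT : 0 < -t := by linarith
  have hw : 0 < R + (-t) ^ b := by positivity
  have h := (((((hasDerivAt_id t).fun_neg).rpow_const (p := b) (Or.inl hT.ne')).const_add
    R).rpow_const (p := k) (Or.inl hw.ne')).const_mul c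
  refine h.congr_deriv ?_
  simp only [id]
  ring

/-- **Barrier for the non-degeneracy theorem (proof of Theorem 1.1).** -/
theorem barrier_nondegeneracy
    (N : ℕ) (hN : 1 ≤ N) (p q m : ℝ)
    (hp : 2 ≤ p) (hq0 : 0 ≤ q) (hq1 : q < 1) (hm : 0 < m) :
    ∃ cbar : ℝ, 0 < cbar ∧
      ∀ c : ℝ, 0 < c → c ≤ cbar →
      ∀ Phi : Euc N × ℝ → ℝ,
        (∀ z : Euc N × ℝ, Phi z =
          c * (‖z.1‖ ^ (p / (p - 1)) +
            (-z.2) ^ ((p - 1 - q) / ((p - 1) * (1 - q)))) ^ ((p - 1) / (p - 1 - q))) →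
        ∀ (x : Euc N) (t : ℝ), 0 < ‖x‖ → ‖x‖ < 1 → -1 < t → t < 0 →
          DifferentiableAt ℝ (fun y => pVF N p Phi (y, t)) x ∧
          DifferentiableAt ℝ (fun s => Phi (x, s)) t ∧
          pLap N p Phi (x, t) - timeDeriv N Phi (x, t) ≤ m * Phi (x, t) ^ q := by
  have hp1 : 0 < p - 1 := by linarith
  have hpq : 0 < p - 1 - q := by linarith
  have hq : 0 < 1 - q := by linarith
  obtain ⟨a, hadef⟩ : ∃ a, a = p / (p - 1) := ⟨_, rfl⟩
  obtain ⟨b, hbdef⟩ : ∃ b, b = (p - 1 - q) / ((p - 1) * (1 - q)) := ⟨_, rfl⟩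
  obtain ⟨k, hkdef⟩ : ∃ k, k = (p - 1) / (p - 1 - q) := ⟨_, rfl⟩
  rw [← hadef, ← hbdef, ← hkdef]
  have hap : (a - 1) * (p - 1) = 1 := by rw [hadef]; field_simp; ring
  have ha : 1 < a := by rw [hadef, one_lt_div hp1]; linarith
  have hk : 0 < k := by rw [hkdef]; positivity
  have hb : 1 ≤ b := by
    rw [hbdef, one_le_div (by positivity)]; nlinarith
  have hbk : b * k = 1 / (1 - q) := by rw [hbdef, hkdef]; field_simp
  have hkβ : (k - 1) * (p - 1) = k * q := by rw [hkdef]; field_simp; ring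
  have hkb : k - 1 + (b - 1) / b = k * q := by
    rw [hkdef, hbdef]; field_simp; ring
  have ha0 : 0 < a := by linarith
  have hb0 : 0 < b := by linarith
  obtain ⟨K, hK⟩ : ∃ K, K = (k * a) ^ (p - 1) * (N + k * q * a) + 1 / (1 - q) := ⟨_, rfl⟩
  have hK0 : 0 < K := by rw [hK]; positivity
  refine ⟨min 1 ((m / K) ^ (1 / (1 - q))), by positivity, ?_⟩
  intro c hc hcb Phi hPhi x t hx hx1 ht1 ht
  have hc1 : c ≤ 1 := hcb.trans (min_le_left _ _)
  have hc2 : c ≤ (m / K) ^ (1 / (1 - q)) := hcb.trans (min_le_right _ _)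
  have hT : 0 < -t := by linarith
  have hτ : 0 < (-t) ^ b := by positivity
  have hev : (fun y => pVF N p Phi (y, t)) =ᶠ[nhds x]
      fun y => ((c * k * a) ^ (p - 1) * (‖y‖ ^ a + (-t) ^ b) ^ (k * q)) • y := by
    have hne : ∀ᶠ y in nhds x, 0 < ‖y‖ := continuous_norm.continuousAt.eventually (lt_mem_nhds hx)
    filter_upwards [hne] with y hy
    rw [← hkβ, ← bar_V N p c a k ((-t) ^ b) ha hap hc hk hτ y hy]
    simp only [pVF, spatialGrad, hPhi]
  obtain ⟨L, hL, htr⟩ := bar_div N ((c * k * a) ^ (p - 1)) a (k * q) ((-t) ^ b) ha hτ x hx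
  have hL' := hL.congr_of_eventuallyEq hev
  have htime := bar_time c (‖x‖ ^ a) b k t (by positivity) ht
  have htime' := htime.congr_of_eventuallyEq (f₁ := fun s => Phi (x, s))
    (Filter.Eventually.of_forall fun s => hPhi (x, s))
  refine ⟨hL'.differentiableAt, htime'.differentiableAt, ?_⟩
  rw [pLap, timeDeriv, hL'.fderiv, htr, htime'.deriv, hPhi]
  simp only
  have hR : 0 < ‖x‖ ^ a := by positivity
  generalize ‖x‖ ^ a = R at hR
  have hTw : (-t) ^ (b - 1) ≤ (R + (-t) ^ b) ^ ((b - 1) / b) := by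
    calc (-t) ^ (b - 1) = ((-t) ^ b) ^ ((b - 1) / b) := by
          rw [← Real.rpow_mul hT.le]; congr 1; field_simp
      _ ≤ _ := Real.rpow_le_rpow hτ.le (by linarith) (div_nonneg (by linarith) hb0.le)
  have hRw : R ≤ R + (-t) ^ b := by linarith
  have hw : 0 < R + (-t) ^ b := by linarith
  generalize R + (-t) ^ b = w at hTw hRw hw
  have hkq : 0 ≤ k * q := by positivity
  have hN0 : (0 : ℝ) ≤ N := Nat.cast_nonneg N
  have h1 : (k * q) * w ^ (k * q - 1) * (a * R) ≤ k * q * a * w ^ (k * q) := by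
    have e : w ^ (k * q) = w ^ (k * q - 1) * w := by
      rw [← Real.rpow_add_one hw.ne']; congr 1; ring
    rw [e]
    calc (k * q) * w ^ (k * q - 1) * (a * R) ≤ (k * q) * w ^ (k * q - 1) * (a * w) := by gcongr
      _ = _ := by ring
  have h2 : w ^ (k - 1) * (-t) ^ (b - 1) ≤ w ^ (k * q) := by
    rw [← hkb, Real.rpow_add hw]; gcongr
  have hcp : c ^ (p - 1) ≤ c := by
    simpa using Real.rpow_le_rpow_of_exponent_ge hc hc1 (show (1 : ℝ) ≤ p - 1 by linarith)
  have hcK : c * K ≤ m * c ^ q := by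
    have h3 : c ^ (1 - q) ≤ m / K := by
      calc c ^ (1 - q) ≤ ((m / K) ^ (1 / (1 - q))) ^ (1 - q) :=
            Real.rpow_le_rpow hc.le hc2 hq.le
        _ = m / K := by
            rw [← Real.rpow_mul (by positivity), one_div_mul_cancel hq.ne', Real.rpow_one]
    have h4 : c = c ^ (1 - q) * c ^ q := by
      rw [← Real.rpow_add hc]; simp
    rw [le_div_iff₀ hK0] at h3
    calc c * K = (c ^ (1 - q) * K) * c ^ q := by nth_rewrite 1 [h4]; ring
      _ ≤ m * c ^ q := by gcongr
  have hA : (c * k * a) ^ (p - 1) ≤ c * (k * a) ^ (p - 1) := by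
    rw [mul_assoc, Real.mul_rpow hc.le (by positivity)]; gcongr
  have hΦ : (c * w ^ k) ^ q = c ^ q * w ^ (k * q) := by
    rw [Real.mul_rpow hc.le (by positivity), Real.rpow_mul hw.le]
  rw [hΦ, hbk]
  have hW : 0 < w ^ (k * q) := by positivity
  calc _ = (c * k * a) ^ (p - 1) * (N * w ^ (k * q) + (k * q) * w ^ (k * q - 1) * (a * R))
        + c * (1 / (1 - q)) * (w ^ (k - 1) * (-t) ^ (b - 1)) := by ring
    _ ≤ (c * (k * a) ^ (p - 1)) * (N * w ^ (k * q) + k * q * a * w ^ (k * q))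
        + c * (1 / (1 - q)) * w ^ (k * q) := by gcongr
    _ = (c * K) * w ^ (k * q) := by rw [hK]; ring
    _ ≤ (m * c ^ q) * w ^ (k * q) := by gcongr
    _ = _ := by ring
end
end

section
/- (Barrier for the growth theorem, proof of Theorem 3.2) For every a > 0 there exists a constant c̄₁ > 0, depending only on N, p, q, m and a, such that for every b > 0 and every c₁ ∈ (0, c̄₁] the function Φ(x,t) := c₁ · ( a‖x‖^{p/(p−1)} + b·t^{(p−1−q)/((p−1)(1−q))} )^{(p−1)/(p−1−q)}, defined for x ∈ ℝ^N and t > 0, satisfies at every point (x,t) with 0 < ‖x‖ < 1 and 0 < t < 1: the vector field V(y,s) := ‖∇Φ(y,s)‖^{p−2} ∇Φ(y,s) is differentiable in the space variable at x, ∂_t Φ(x,t) exists with ∂_t Φ(x,t) ≥ 0, and trace(D_x V(x,t)) − ∂_t Φ(x,t) ≤ m · Φ(x,t)^q. In particular Δ_p Φ − ∂_t Φ − λ₀ Φ^q ≤ 0 there for every λ₀ ≥ m. -/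
noncomputable section

open Set Metric MeasureTheory

/-- Gradient of `c (a ‖y‖^α + B)^β`. -/
lemma barrier_grad (N : ℕ) (c a B α β : ℝ) (ha : 0 < a) (hB : 0 < B) (hα : 1 < α)
    (y : Euc N) :
    gradient (fun y : Euc N => c * (a * ‖y‖ ^ α + B) ^ β) y =
      (c * (β * (a * ‖y‖ ^ α + B) ^ (β - 1) * (a * (α * ‖y‖ ^ (α - 2))))) • y := by
  have hW : a * ‖y‖ ^ α + B ≠ 0 := by positivity
  have h1 := hasFDerivAt_norm_rpow y hα
  have h2 := ((((h1.const_mul a).add_const B).rpow_const (p := β) (Or.inl hW)).const_mul c)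
  apply HasGradientAt.gradient
  rw [hasGradientAt_iff_hasFDerivAt]
  refine h2.congr_fderiv ?_
  refine ContinuousLinearMap.ext fun v => ?_
  simp
  ring

/-- Derivative of `K (a ‖y‖^α + B)^σ • y`. -/
lemma barrier_vf (N : ℕ) (K a B α σ : ℝ) (ha : 0 < a) (hB : 0 < B) (hα : 1 < α)
    (y : Euc N) :
    ∃ L : Euc N →L[ℝ] Euc N,
      HasFDerivAt (fun y : Euc N => (K * (a * ‖y‖ ^ α + B) ^ σ) • y) L y ∧
      LinearMap.trace ℝ (Euc N) L.toLinearMap =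
        K * (N * (a * ‖y‖ ^ α + B) ^ σ +
          σ * (a * ‖y‖ ^ α + B) ^ (σ - 1) * (a * (α * ‖y‖ ^ (α - 2))) * ‖y‖ ^ 2) := by
  have hW : a * ‖y‖ ^ α + B ≠ 0 := by positivity
  have h1 := hasFDerivAt_norm_rpow y hα
  have h2 := ((((h1.const_mul a).add_const B).rpow_const (p := σ) (Or.inl hW)).const_mul K)
  have h3 := h2.smul (hasFDerivAt_id y)
  refine ⟨_, h3, ?_⟩
  rw [ContinuousLinearMap.toLinearMap_add, map_add]
  refine (congrArg₂ (x' := (K * (a * ‖y‖ ^ α + B) ^ σ) * N) (· + ·) ?_ (LinearMap.trace_smulRight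
    (ContinuousLinearMap.toLinearMap _) (id y))).trans ?_
  · rw [ContinuousLinearMap.toLinearMap_smul, map_smul, ContinuousLinearMap.coe_id,
      LinearMap.trace_id]
    simp
  · simp
    ring

/-- The `p`-Laplace flux of the barrier. -/
lemma barrier_flux (N : ℕ) (p q a B c : ℝ) (hp : 2 ≤ p) (hq0 : 0 ≤ q) (hq1 : q < 1)
    (ha : 0 < a) (hB : 0 < B) (hc : 0 < c) (y : Euc N) (hy : 0 < ‖y‖) (g : Euc N)
    (hg : g = (c * ((p - 1) / (p - 1 - q) * (a * ‖y‖ ^ (p / (p - 1)) + B) ^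
      ((p - 1) / (p - 1 - q) - 1) * (a * (p / (p - 1) * ‖y‖ ^ (p / (p - 1) - 2))))) • y) :
    ‖g‖ ^ (p - 2) • g =
      ((c * ((p - 1) / (p - 1 - q) * a * (p / (p - 1)))) ^ (p - 1) *
        (a * ‖y‖ ^ (p / (p - 1)) + B) ^ ((p - 1) / (p - 1 - q) * q)) • y := by
  have h1 : 0 < p - 1 := by linarith
  have h2 : 0 < p - 1 - q := by linarith
  have h0 : 0 < p := by linarith
  have hβ : 0 < (p - 1) / (p - 1 - q) := by positivity
  have hα : 0 < p / (p - 1) := by positivity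
  have hW : 0 < a * ‖y‖ ^ (p / (p - 1)) + B := by positivity
  have e1 : ((p - 1) / (p - 1 - q) - 1) * (p - 1) = (p - 1) / (p - 1 - q) * q := by
    field_simp; ring
  have e2 : (p / (p - 1) - 2) * (p - 1) = -(p - 2) := by
    field_simp; ring
  set β := (p - 1) / (p - 1 - q)
  set α := p / (p - 1)
  set W := a * ‖y‖ ^ α + B
  set s := c * (β * W ^ (β - 1) * (a * (α * ‖y‖ ^ (α - 2)))) with hs
  have hs0 : 0 < s := by positivity
  rw [hg, norm_smul, Real.norm_of_nonneg hs0.le, smul_smul]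
  congr 1
  have e3 : s = (c * (β * a * α)) * (W ^ (β - 1) * ‖y‖ ^ (α - 2)) := by rw [hs]; ring
  rw [Real.mul_rpow hs0.le hy.le, mul_right_comm, ← Real.rpow_add_one hs0.ne',
    show p - 2 + 1 = p - 1 by ring, e3,
    Real.mul_rpow (x := c * (β * a * α)) (by positivity) (by positivity),
    Real.mul_rpow (x := W ^ (β - 1)) (by positivity) (by positivity), ← Real.rpow_mul hW.le, e1,
    ← Real.rpow_mul hy.le, e2, mul_assoc, mul_assoc (W ^ (β * q)), ← Real.rpow_add hy]
  simp

/-- **Barrier for the growth theorem (proof of Theorem 3.2).** -/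
theorem barrier_growth
    (N : ℕ) (hN : 1 ≤ N) (p q m : ℝ)
    (hp : 2 ≤ p) (hq0 : 0 ≤ q) (hq1 : q < 1) (hm : 0 < m)
    (a : ℝ) (ha : 0 < a) :
    ∃ cbar₁ : ℝ, 0 < cbar₁ ∧
      ∀ b : ℝ, 0 < b →
      ∀ c₁ : ℝ, 0 < c₁ → c₁ ≤ cbar₁ →
      ∀ Phi : Euc N × ℝ → ℝ,
        (∀ z : Euc N × ℝ, Phi z =
          c₁ * (a * ‖z.1‖ ^ (p / (p - 1)) +
            b * z.2 ^ ((p - 1 - q) / ((p - 1) * (1 - q)))) ^ ((p - 1) / (p - 1 - q))) →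
        ∀ (x : Euc N) (t : ℝ), 0 < ‖x‖ → ‖x‖ < 1 → 0 < t → t < 1 →
          DifferentiableAt ℝ (fun y => pVF N p Phi (y, t)) x ∧
          DifferentiableAt ℝ (fun s => Phi (x, s)) t ∧
          0 ≤ timeDeriv N Phi (x, t) ∧
          pLap N p Phi (x, t) - timeDeriv N Phi (x, t) ≤ m * Phi (x, t) ^ q := by
  have h1 : 0 < p - 1 := by linarith
  have h2 : 0 < p - 1 - q := by linarith
  have h0 : 0 < p := by linarith
  have h3 : 0 < 1 - q := by linarith
  have hβ : 0 < (p - 1) / (p - 1 - q) := by positivity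
  have hα : 1 < p / (p - 1) := by rw [lt_div_iff₀ h1]; linarith
  have hγ : 0 < (p - 1 - q) / ((p - 1) * (1 - q)) := by positivity
  have hflux := barrier_flux N p q a
  set β := (p - 1) / (p - 1 - q)
  set α := p / (p - 1)
  set γ := (p - 1 - q) / ((p - 1) * (1 - q))
  have hα0 : 0 < α := by linarith
  have hN' : (0 : ℝ) < N := by exact_mod_cast hN
  set M := (β * a * α) ^ (p - 1) * (N + β * q * α) with hM
  have hM0 : 0 < M := by positivity
  refine ⟨(m / M) ^ (1 / (p - 1 - q)), by positivity, ?_⟩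
  intro b hb c hc hcle Phi hPhi x t hx _ ht _
  have hB : 0 < b * t ^ γ := by positivity
  have hgrad : ∀ y, spatialGrad N Phi (y, t) =
      (c * (β * (a * ‖y‖ ^ α + b * t ^ γ) ^ (β - 1) * (a * (α * ‖y‖ ^ (α - 2))))) • y := by
    intro y
    rw [← barrier_grad N c a (b * t ^ γ) α β ha hB hα y]
    simp only [spatialGrad, hPhi]
  have hev : (fun y => pVF N p Phi (y, t)) =ᶠ[nhds x]
      fun y => ((c * (β * a * α)) ^ (p - 1) * (a * ‖y‖ ^ α + b * t ^ γ) ^ (β * q)) • y := by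
    have : ∀ᶠ y in nhds x, 0 < ‖y‖ := continuous_norm.continuousAt.eventually (lt_mem_nhds hx)
    filter_upwards [this] with y hy
    exact hflux (b * t ^ γ) c hp hq0 hq1 ha hB hc y hy _ (hgrad y)
  obtain ⟨L, hL, htr⟩ := barrier_vf N ((c * (β * a * α)) ^ (p - 1)) a (b * t ^ γ) α (β * q)
    ha hB hα x
  have hL' := hL.congr_of_eventuallyEq hev
  set W := a * ‖x‖ ^ α + b * t ^ γ with hWdef
  have hW : 0 < W := by positivity
  have htd : HasDerivAt (fun s => Phi (x, s))
      (c * (b * (γ * t ^ (γ - 1)) * β * W ^ (β - 1))) t := by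
    have k1 := Real.hasDerivAt_rpow_const (x := t) (p := γ) (Or.inl ht.ne')
    have k2 := ((((k1.const_mul b).const_add (a * ‖x‖ ^ α)).rpow_const (p := β)
      (Or.inl hW.ne')).const_mul c)
    simp only [hPhi]
    exact k2
  have htd0 : 0 ≤ timeDeriv N Phi (x, t) := by
    simp only [timeDeriv]
    rw [htd.deriv]
    positivity
  refine ⟨hL'.differentiableAt, htd.differentiableAt, htd0, ?_⟩
  have hlap : pLap N p Phi (x, t) ≤ m * Phi (x, t) ^ q := by
    simp only [pLap]
    rw [hL'.fderiv, htr, hPhi]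
    simp only []
    rw [← hWdef, Real.mul_rpow (y := W ^ β) hc.le (by positivity), ← Real.rpow_mul hW.le]
    have hr : ‖x‖ ^ (α - 2) * ‖x‖ ^ 2 = ‖x‖ ^ α := by
      rw [← Real.rpow_natCast, ← Real.rpow_add hx]; norm_num
    have hle : a * ‖x‖ ^ α ≤ W := by rw [hWdef]; linarith
    have hb1 : β * q * W ^ (β * q - 1) * (a * (α * ‖x‖ ^ (α - 2))) * ‖x‖ ^ 2 ≤
        β * q * α * W ^ (β * q) := by
      calc _ = β * q * α * W ^ (β * q - 1) * (a * (‖x‖ ^ (α - 2) * ‖x‖ ^ 2)) := by ring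
        _ = β * q * α * W ^ (β * q - 1) * (a * ‖x‖ ^ α) := by rw [hr]
        _ ≤ β * q * α * W ^ (β * q - 1) * W := by gcongr
        _ = β * q * α * (W ^ (β * q - 1) * W) := by ring
        _ = _ := by rw [← Real.rpow_add_one hW.ne']; simp
    have hcM : c ^ (p - 1 - q) * M ≤ m := by
      have := Real.rpow_le_rpow hc.le hcle h2.le
      rw [← Real.rpow_mul (by positivity), one_div, inv_mul_cancel₀ h2.ne', Real.rpow_one] at this
      rwa [le_div_iff₀ hM0] at this
    have hcs : c ^ (p - 1) = c ^ (p - 1 - q) * c ^ q := by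
      rw [← Real.rpow_add hc]; ring_nf
    calc _ ≤ (c * (β * a * α)) ^ (p - 1) * (N * W ^ (β * q) + β * q * α * W ^ (β * q)) := by
          gcongr
      _ = (c ^ (p - 1 - q) * M) * (c ^ q * W ^ (β * q)) := by
          rw [Real.mul_rpow hc.le (by positivity), hcs, hM]; ring
      _ ≤ m * (c ^ q * W ^ (β * q)) := by gcongr
  linarith
end
end

section
/- (Explicit half-space stationary dead-core solution, one-dimensional form) Let p ≥ 2, 0 < q < 1 and λ > 0. Set α := p/(p−1−q) and let κ > 0 satisfy κ^{p−1−q} = λ·(p−1−q)^p / ( p^{p−1}·(p−1)·(1+q) ). Define u : ℝ → ℝ by u(x) := κ·max(x,0)^α. Then u is differentiable on ℝ, the function g(x) := |u′(x)|^{p−2}·u′(x) is differentiable on ℝ, and g′(x) = λ·(max(u(x),0))^q for every x ∈ ℝ. Thus u is a time-independent solution of Δ_p u − ∂_t u = λ u₊^q in one space dimension, with dead core {x ≤ 0}, exhibiting the sharp growth rate α = p/(p−1−q) from its free boundary point x = 0. -/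
noncomputable section

open Real Set

theorem hasDerivAt_max_rpow (a : ℝ) (ha : 1 < a) (x : ℝ) :
    HasDerivAt (fun y : ℝ => max y 0 ^ a) (a * max x 0 ^ (a - 1)) x := by
  have hne : ∀ y : ℝ, y ≠ 0 →
      HasDerivAt (fun y : ℝ => max y 0 ^ a) (a * max y 0 ^ (a - 1)) y := by
    intro y hy
    rcases lt_or_gt_of_ne hy with h | h
    · have h1 : (fun y : ℝ => max y 0 ^ a) =ᶠ[nhds y] fun _ => 0 := by
        filter_upwards [Iio_mem_nhds h] with z hz
        rw [max_eq_right (le_of_lt hz), Real.zero_rpow (by linarith)]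
      rw [max_eq_right h.le, Real.zero_rpow (by linarith), mul_zero]
      exact (hasDerivAt_const y (0 : ℝ)).congr_of_eventuallyEq h1
    · have h1 : (fun y : ℝ => max y 0 ^ a) =ᶠ[nhds y] fun z => z ^ a := by
        filter_upwards [Ioi_mem_nhds h] with z hz
        rw [max_eq_left (le_of_lt hz)]
      rw [max_eq_left h.le]
      exact (Real.hasDerivAt_rpow_const (Or.inl hy)).congr_of_eventuallyEq h1
  have hc : ∀ b : ℝ, 0 < b → Continuous (fun y : ℝ => max y 0 ^ b) := fun b hb =>
    (continuous_id.max continuous_const).rpow_const (fun _ => Or.inr hb.le)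
  by_cases hx : x = 0
  · subst hx
    exact hasDerivAt_of_hasDerivAt_of_ne (g := fun y : ℝ => a * max y 0 ^ (a - 1))
      (fun y hy => hne y hy) (hc a (by linarith)).continuousAt
      (continuous_const.mul (hc (a - 1) (by linarith))).continuousAt
  · exact hne x hx

/-- **Explicit half-space stationary dead-core solution (one-dimensional form).**
With `α = p/(p-1-q)` and `κ > 0` satisfying
`κ^(p-1-q) = λ (p-1-q)^p / (p^(p-1) (p-1) (1+q))`, the function `u(x) = κ (max x 0)^α`
is differentiable on `ℝ` and `g := |u'|^(p-2) u'` is differentiable with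
`g' x = λ (max (u x) 0)^q`, i.e. `u` is a time-independent solution of
`Δ_p u - ∂ₜ u = λ u₊^q` in one space dimension with dead core `{x ≤ 0}`. -/
theorem halfspace_stationary_dead_core_solution
    (p q lam : ℝ) (hp : 2 ≤ p) (hq0 : 0 < q) (hq1 : q < 1) (hlam : 0 < lam)
    (α κ : ℝ) (hα : α = p / (p - 1 - q)) (hκ : 0 < κ)
    (hκeq : κ ^ (p - 1 - q) = lam * (p - 1 - q) ^ p / (p ^ (p - 1) * (p - 1) * (1 + q)))
    (u : ℝ → ℝ) (hu : ∀ x : ℝ, u x = κ * max x 0 ^ α) :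
    (∀ x : ℝ, DifferentiableAt ℝ u x) ∧
    (∀ x : ℝ, DifferentiableAt ℝ (fun y => |deriv u y| ^ (p - 2) * deriv u y) x) ∧
    (∀ x : ℝ, deriv (fun y => |deriv u y| ^ (p - 2) * deriv u y) x
      = lam * (max (u x) 0) ^ q) := by
  have hr : 0 < p - 1 - q := by linarith
  have hα1 : 1 < α := by
    rw [hα, one_lt_div hr]; linarith
  have hα0 : 0 < α := by linarith
  have hu' : ∀ x, HasDerivAt u (κ * (α * max x 0 ^ (α - 1))) x := by
    intro x
    rw [funext hu]
    exact (hasDerivAt_max_rpow α hα1 x).const_mul κ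
  have hβ : (α - 1) * (p - 1) = q * α + 1 := by
    rw [hα]; field_simp; ring
  have hg : (fun y => |deriv u y| ^ (p - 2) * deriv u y)
      = fun y => (κ * α) ^ (p - 1) * max y 0 ^ (q * α + 1) := by
    funext y
    have hm : 0 ≤ max y 0 := le_max_right _ _
    have hm' : 0 ≤ max y 0 ^ (α - 1) := Real.rpow_nonneg hm _
    have hκα : 0 ≤ κ * α := by positivity
    have hd : 0 ≤ κ * α * max y 0 ^ (α - 1) := by positivity
    rw [(hu' y).deriv, ← mul_assoc κ α, abs_of_nonneg hd,
      ← Real.rpow_add_one' hd (by linarith), show p - 2 + 1 = p - 1 by ring,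
      Real.mul_rpow hκα hm', ← Real.rpow_mul hm, hβ]
  have hcoef : (κ * α) ^ (p - 1) * (q * α + 1) = lam * κ ^ q := by
    have hp0 : 0 < p := by linarith
    have hp1 : 0 < p - 1 := by linarith
    have hk : κ ^ (p - 1) = κ ^ (p - 1 - q) * κ ^ q := by
      rw [← Real.rpow_add hκ]; congr 1; ring
    have hrp : (p - 1 - q) ^ p = (p - 1 - q) ^ (p - 1) * (p - 1 - q) := by
      rw [← Real.rpow_add_one hr.ne']; congr 1; ring
    have hA : 0 < p ^ (p - 1) := Real.rpow_pos_of_pos hp0 _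
    have hB : 0 < (p - 1 - q) ^ (p - 1) := Real.rpow_pos_of_pos hr _
    have h1q : 0 < 1 + q := by linarith
    have hβ' : q * α + 1 = (1 + q) * (p - 1) / (p - 1 - q) := by
      rw [hα]; field_simp; ring
    rw [Real.mul_rpow hκ.le hα0.le, hk, hκeq, hβ', hα, Real.div_rpow hp0.le hr.le, hrp]
    generalize p ^ (p - 1) = A at *
    generalize (p - 1 - q) ^ (p - 1) = B at *
    field_simp
  have hqα : 0 < q * α := by positivity
  have hg' : ∀ x, HasDerivAt (fun y => |deriv u y| ^ (p - 2) * deriv u y)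
      (lam * (max (u x) 0) ^ q) x := by
    intro x
    have hm : 0 ≤ max x 0 := le_max_right _ _
    have hm' : 0 ≤ max x 0 ^ α := Real.rpow_nonneg hm _
    rw [hg]
    have h := (hasDerivAt_max_rpow (q * α + 1) (by linarith) x).const_mul ((κ * α) ^ (p - 1))
    refine h.congr_deriv (Eq.symm ?_)
    rw [hu, max_eq_left (by positivity), Real.mul_rpow hκ.le hm', ← Real.rpow_mul hm,
      ← mul_assoc, ← mul_assoc, hcoef, add_sub_cancel_right, mul_comm α q]
  exact ⟨fun x => (hu' x).differentiableAt, fun x => (hg' x).differentiableAt,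
    fun x => (hg' x).deriv⟩
end
end

section
/- (Explicit radial stationary dead-core/blow-up profile) Let N ≥ 1 be an integer, p ≥ 2, 0 < q < 1, λ > 0 and x₀ ∈ ℝ^N. Set α₀ := p/(p−1−q) and let C > 0 satisfy C^{p−1−q} = λ·(p−1−q)^p / ( p^{p−1}·( pq + N(p−1−q) ) ). Define u : ℝ^N → ℝ by u(x) := C·‖x−x₀‖^{α₀}. Then for every x ≠ x₀ the vector field V(y) := ‖∇u(y)‖^{p−2} ∇u(y) is differentiable at x and trace(DV(x)) = λ·u(x)^q. Thus the time-independent function (x,t) ↦ u(x) solves the dead-core equation Δ_p u − ∂_t u = λ u₊^q on (ℝ^N \ {x₀}) × ℝ and attains the critical growth rate α₀ at its zero point x₀. -/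
noncomputable section

open Set Metric MeasureTheory

lemma hasFDerivAt_norm_sub_rpow {N : ℕ} (x0 x : Euc N) (hx : x ≠ x0) (a : ℝ) :
    HasFDerivAt (fun y : Euc N => ‖y - x0‖ ^ a)
      ((a * ‖x - x0‖ ^ (a - 2)) • innerSL ℝ (x - x0)) x := by
  have hpos : 0 < ‖x - x0‖ := norm_pos_iff.mpr (sub_ne_zero.mpr hx)
  have h1 : HasFDerivAt (fun y : Euc N => y - x0) (ContinuousLinearMap.id ℝ (Euc N)) x :=
    (hasFDerivAt_id x).sub_const x0
  have h2 := h1.norm_sq.rpow_const (p := a / 2) (Or.inl (by positivity))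
  have e : (fun y : Euc N => (‖y - x0‖ ^ 2) ^ (a / 2)) = fun y : Euc N => ‖y - x0‖ ^ a := by
    funext y
    rw [← Real.rpow_natCast, ← Real.rpow_mul (norm_nonneg _)]
    congr 1
    push_cast
    ring
  rw [e] at h2
  refine h2.congr_fderiv ?_
  have e2 : (‖x - x0‖ ^ 2) ^ (a / 2 - 1) = ‖x - x0‖ ^ (a - 2) := by
    rw [← Real.rpow_natCast, ← Real.rpow_mul (norm_nonneg _)]
    congr 1
    push_cast
    ring
  rw [e2]
  ext v
  simp
  ring

lemma gradient_norm_sub_rpow {N : ℕ} (x0 x : Euc N) (hx : x ≠ x0) (a C : ℝ) :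
    gradient (fun y : Euc N => C * ‖y - x0‖ ^ a) x
      = (C * a * ‖x - x0‖ ^ (a - 2)) • (x - x0) := by
  apply HasGradientAt.gradient
  rw [hasGradientAt_iff_hasFDerivAt]
  refine ((hasFDerivAt_norm_sub_rpow x0 x hx a).const_mul C).congr_fderiv ?_
  ext v
  simp
  ring

lemma flux_eq {N : ℕ} (x0 x : Euc N) (hx : x ≠ x0) (a C p : ℝ) (hC : 0 < C) (ha : 0 < a) :
    ‖gradient (fun y : Euc N => C * ‖y - x0‖ ^ a) x‖ ^ (p - 2) •
      gradient (fun y : Euc N => C * ‖y - x0‖ ^ a) x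
      = ((C * a) ^ (p - 1)) • (‖x - x0‖ ^ ((a - 1) * (p - 1) - 1) • (x - x0)) := by
  have hpos : 0 < ‖x - x0‖ := norm_pos_iff.mpr (sub_ne_zero.mpr hx)
  have hCa : 0 < C * a := mul_pos hC ha
  rw [gradient_norm_sub_rpow x0 x hx]
  have hn : ‖(C * a * ‖x - x0‖ ^ (a - 2)) • (x - x0)‖ = C * a * ‖x - x0‖ ^ (a - 1) := by
    rw [norm_smul, Real.norm_of_nonneg (by positivity), mul_assoc]
    congr 1
    nth_rewrite 2 [← Real.rpow_one ‖x - x0‖]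
    rw [← Real.rpow_add hpos]
    congr 1
    ring
  rw [hn, smul_smul, smul_smul]
  congr 1
  rw [Real.mul_rpow hCa.le (by positivity), ← Real.rpow_mul hpos.le]
  have e1 : (C * a) ^ (p - 1) = (C * a) ^ (p - 2) * (C * a) := by
    nth_rewrite 3 [← Real.rpow_one (C * a)]
    rw [← Real.rpow_add hCa]
    congr 1
    ring
  have e2 : ‖x - x0‖ ^ ((a - 1) * (p - 1) - 1)
      = ‖x - x0‖ ^ ((a - 1) * (p - 2)) * ‖x - x0‖ ^ (a - 2) := by
    rw [← Real.rpow_add hpos]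
    congr 1
    ring
  rw [e1, e2]
  ring

lemma hasFDerivAt_flux {N : ℕ} (x0 x : Euc N) (hx : x ≠ x0) (a C p : ℝ)
    (hC : 0 < C) (ha : 0 < a) :
    HasFDerivAt (fun y : Euc N => ‖gradient (fun y : Euc N => C * ‖y - x0‖ ^ a) y‖ ^ (p - 2) •
      gradient (fun y : Euc N => C * ‖y - x0‖ ^ a) y)
      (((C * a) ^ (p - 1)) • (‖x - x0‖ ^ ((a - 1) * (p - 1) - 1) • ContinuousLinearMap.id ℝ (Euc N)
        + ((((a - 1) * (p - 1) - 1) * ‖x - x0‖ ^ ((a - 1) * (p - 1) - 1 - 2)) •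
            innerSL ℝ (x - x0)).smulRight (x - x0))) x := by
  have h1 : HasFDerivAt (fun y : Euc N => y - x0) (ContinuousLinearMap.id ℝ (Euc N)) x :=
    (hasFDerivAt_id x).sub_const x0
  have h := ((hasFDerivAt_norm_sub_rpow x0 x hx ((a - 1) * (p - 1) - 1)).smul h1).const_smul
    ((C * a) ^ (p - 1))
  refine h.congr_of_eventuallyEq ?_
  filter_upwards [isOpen_ne.mem_nhds hx] with y hy
  exact flux_eq x0 y hy a C p hC ha

lemma trace_flux {N : ℕ} (v : Euc N) (hv : v ≠ 0) (K b : ℝ) :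
    LinearMap.trace ℝ (Euc N) (K • (‖v‖ ^ b • ContinuousLinearMap.id ℝ (Euc N)
        + ((b * ‖v‖ ^ (b - 2)) • innerSL ℝ v).smulRight v)).toLinearMap
      = K * (N + b) * ‖v‖ ^ b := by
  have hpos : 0 < ‖v‖ := norm_pos_iff.mpr hv
  have e : (K • (‖v‖ ^ b • ContinuousLinearMap.id ℝ (Euc N)
        + ((b * ‖v‖ ^ (b - 2)) • innerSL ℝ v).smulRight v)).toLinearMap
      = K • (‖v‖ ^ b • LinearMap.id
        + (((b * ‖v‖ ^ (b - 2)) • innerSL ℝ v).toLinearMap).smulRight v) := rfl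
  have e2 : ‖v‖ ^ b = ‖v‖ ^ (b - 2) * ‖v‖ ^ 2 := by
    rw [← Real.rpow_natCast, ← Real.rpow_add hpos]
    congr 1
    push_cast
    ring
  rw [e, map_smul, map_add, map_smul, LinearMap.trace_id, LinearMap.trace_smulRight]
  simp only [ContinuousLinearMap.coe_coe, smul_apply, innerSL_apply_apply,
    real_inner_self_eq_norm_sq, smul_eq_mul, finrank_euclideanSpace, Fintype.card_fin]
  rw [e2]
  ring

/-- **Explicit radial stationary dead-core/blow-up profile.** -/
theorem radial_stationary_profile
    (N : ℕ) (hN : 1 ≤ N) (p q lam : ℝ)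
    (hp : 2 ≤ p) (hq0 : 0 < q) (hq1 : q < 1) (hlam : 0 < lam)
    (x0 : Euc N) (α₀ C : ℝ) (hα : α₀ = p / (p - 1 - q)) (hC : 0 < C)
    (hCeq : C ^ (p - 1 - q) =
      lam * (p - 1 - q) ^ p / (p ^ (p - 1) * (p * q + N * (p - 1 - q)))) :
    ∀ x : Euc N, x ≠ x0 →
      DifferentiableAt ℝ (fun y : Euc N =>
        ‖gradient (fun y' : Euc N => C * ‖y' - x0‖ ^ α₀) y‖ ^ (p - 2) •
          gradient (fun y' : Euc N => C * ‖y' - x0‖ ^ α₀) y) x ∧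
      LinearMap.trace ℝ (Euc N)
        (fderiv ℝ (fun y : Euc N =>
          ‖gradient (fun y' : Euc N => C * ‖y' - x0‖ ^ α₀) y‖ ^ (p - 2) •
            gradient (fun y' : Euc N => C * ‖y' - x0‖ ^ α₀) y) x).toLinearMap
        = lam * (C * ‖x - x0‖ ^ α₀) ^ q := by
  intro x hx
  have hs : 0 < p - 1 - q := by linarith
  have hp0 : 0 < p := by linarith
  have hα0 : 0 < α₀ := by rw [hα]; positivity
  have h := hasFDerivAt_flux x0 x hx α₀ C p hC hα0
  refine ⟨h.differentiableAt, ?_⟩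
  rw [h.fderiv, trace_flux (x - x0) (sub_ne_zero.mpr hx)]
  have hb : (α₀ - 1) * (p - 1) - 1 = α₀ * q := by
    rw [hα]; field_simp; ring
  rw [hb, Real.mul_rpow hC.le (Real.rpow_nonneg (norm_nonneg (x - x0)) α₀), ← Real.rpow_mul (norm_nonneg _), ← mul_assoc]
  congr 1
  have hN0 : (0 : ℝ) ≤ N := Nat.cast_nonneg N
  have hD : 0 < p * q + N * (p - 1 - q) := by positivity
  have e1 : C ^ (p - 1) = C ^ (p - 1 - q) * C ^ q := by
    rw [← Real.rpow_add hC]; congr 1; ring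
  have e2 : (p - 1 - q) ^ p = (p - 1 - q) ^ (p - 1) * (p - 1 - q) := by
    nth_rewrite 3 [← Real.rpow_one (p - 1 - q)]
    rw [← Real.rpow_add hs]; congr 1; ring
  have h1 : 0 < (p - 1 - q) ^ (p - 1) := Real.rpow_pos_of_pos hs _
  have h2 : 0 < p ^ (p - 1) := Real.rpow_pos_of_pos hp0 _
  rw [Real.mul_rpow hC.le hα0.le, e1, hCeq, hα, Real.div_rpow hp0.le hs.le, e2]
  generalize (p - 1 - q) ^ (p - 1) = A at *
  generalize p ^ (p - 1) = B at *
  generalize C ^ q = G at *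
  have h3 : (N : ℝ) + p / (p - 1 - q) * q = (p * q + N * (p - 1 - q)) / (p - 1 - q) := by
    field_simp; ring
  rw [h3]
  generalize p * q + N * (p - 1 - q) = D at *
  generalize p - 1 - q = s at *
  field_simp
end
end
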